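/- Fix N ≥ 1, q₀ ∈ ℝ, κ ≥ 0 and α > 0. Define F(u,v) = Σ_{t=1}^N (κ u_t Σ_{j=1}^t (u_j + v_j) + α u_t²) + Σ_{t=1}^N (κ v_t Σ_{j=1}^t (u_j + v_j) + α v_t²) for u, v ∈ ℝ^N. Then for every (u,v) with Σ_{t=1}^N u_t = q₀ and Σ_{t=1}^N v_t = q₀ one has F(u,v) ≥ F(c,c), where c ∈ ℝ^N is the constant vector c_t = q₀/N, and equality holds if and only if u = v = c. In other words, the TWAP pair is the unique minimizer of the joint expected implementation shortfall over the admissible set. -/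

import Mathlib

open Finset

/-- The joint expected implementation shortfall of the two agents in the two-player
Almgren–Chriss market impact game:
`F(u,v) = Σ_{t=1}^N (κ u_t Σ_{j=1}^t (u_j + v_j) + α u_t²)
        + Σ_{t=1}^N (κ v_t Σ_{j=1}^t (u_j + v_j) + α v_t²)`,
with `t = 1, …, N` encoded by `t : Fin N` and `Σ_{j=1}^t` by the sum over `j ∈ Iic t`. -/
noncomputable def jointCost (N : ℕ) (κ α : ℝ) (u v : Fin N → ℝ) : ℝ :=
  (∑ t : Fin N, (κ * u t * (∑ j ∈ Iic t, (u j + v j)) + α * (u t) ^ 2)) +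
  (∑ t : Fin N, (κ * v t * (∑ j ∈ Iic t, (u j + v j)) + α * (v t) ^ 2))

/-!
With `w = u + v` and `d = u - v`, symmetrizing the double sum `∑_{j ≤ t} w_t w_j` gives
`F(u,v) = κ/2 (∑ w_t)² + (κ + α)/2 ∑ w_t² + α/2 ∑ d_t²`.
The first term is fixed by the inventories and the other two are positive multiples of sums of
squares, each of which, for a prescribed total, is smallest exactly at the constant vector.
-/

section OrderedSum

variable {ι : Type*} [Fintype ι] [LinearOrder ι] [LocallyFiniteOrderBot ι]
  [LocallyFiniteOrderTop ι]

lemma sum_Iic_add_sum_Ici {M : Type*} [AddCommMonoid M] (w : ι → M) (t : ι) :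
    ∑ j ∈ Iic t, w j + ∑ j ∈ Ici t, w j = ∑ j, w j + w t := by
  have h_union : Iic t ∪ Ici t = univ := by ext j; simp [le_total]
  have h_inter : Iic t ∩ Ici t = {t} := by ext j; simp [le_antisymm_iff]
  rw [← sum_union_inter, h_union, h_inter, sum_singleton]

lemma two_mul_sum_mul_sum_Iic {R : Type*} [CommSemiring R] (w : ι → R) :
    2 * ∑ t, w t * ∑ j ∈ Iic t, w j = (∑ t, w t) ^ 2 + ∑ t, w t ^ 2 := by
  have h_swap : ∑ t, w t * ∑ j ∈ Iic t, w j = ∑ t, w t * ∑ j ∈ Ici t, w j := by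
    simp only [mul_sum]
    rw [sum_comm' (t' := univ) (s' := Ici) (by simp)]
    simp only [mul_comm]
  calc 2 * ∑ t, w t * ∑ j ∈ Iic t, w j
      = ∑ t, w t * (∑ j ∈ Iic t, w j + ∑ j ∈ Ici t, w j) := by
        simp only [mul_add, sum_add_distrib, ← h_swap, two_mul]
    _ = (∑ t, w t) ^ 2 + ∑ t, w t ^ 2 := by
        simp only [sum_Iic_add_sum_Ici, mul_add, sum_add_distrib, ← sum_mul, sq]

end OrderedSum

lemma sum_sq_eq_card_mul_sq_add_sum_sub_sq {ι R : Type*} [CommRing R] {s : Finset ι}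
    {w : ι → R} {a : R} (h : ∑ i ∈ s, w i = #s * a) :
    ∑ i ∈ s, w i ^ 2 = #s * a ^ 2 + ∑ i ∈ s, (w i - a) ^ 2 := by
  simp only [sub_sq, sum_add_distrib, sum_sub_distrib, ← sum_mul, ← mul_sum, h, sum_const,
    nsmul_eq_mul]
  ring

lemma add_eq_and_sub_eq_iff {G : Type*} [AddCommGroup G] [IsAddTorsionFree G] {a b c d : G} :
    a + b = c + d ∧ a - b = c - d ↔ a = c ∧ b = d := by
  refine ⟨fun ⟨h_add, h_sub⟩ => ?_, by rintro ⟨rfl, rfl⟩; simp⟩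
  have h_two : 2 • a = 2 • c := by
    calc 2 • a = (a + b) + (a - b) := by abel
      _ = (c + d) + (c - d) := by rw [h_add, h_sub]
      _ = 2 • c := by abel
  obtain rfl : a = c := nsmul_right_injective two_ne_zero h_two
  exact ⟨rfl, add_left_cancel h_add⟩

/-- The time-weighted average price (TWAP) strategy, which liquidates the inventory `q` in `N`
equal trades. -/
noncomputable def twap (N : ℕ) (q : ℝ) : Fin N → ℝ := fun _ => q / N

section Twap

variable {N : ℕ} {p q : ℝ}

lemma twap_add : twap N (p + q) = twap N p + twap N q :=
  funext fun _ => add_div p q N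

lemma twap_sub : twap N (p - q) = twap N p - twap N q :=
  funext fun _ => sub_div p q N

lemma sum_twap (hN : 1 ≤ N) : ∑ t, twap N q t = q := by
  have : (N : ℝ) ≠ 0 := by positivity
  simp [twap, mul_div_cancel₀, this]

lemma sum_sq_eq_sum_sq_twap_add {w : Fin N → ℝ} (hN : 1 ≤ N) (hw : ∑ t, w t = q) :
    ∑ t, w t ^ 2 = ∑ t, twap N q t ^ 2 + ∑ t, (w t - twap N q t) ^ 2 := by
  have h_mean : ∑ t, w t = #(univ : Finset (Fin N)) * (q / N) := by
    rw [hw, ← nsmul_eq_mul, ← sum_const]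
    exact (sum_twap hN).symm
  simpa [twap] using sum_sq_eq_card_mul_sq_add_sum_sub_sq h_mean

lemma sum_sq_twap_le {w : Fin N → ℝ} (hN : 1 ≤ N) (hw : ∑ t, w t = q) :
    ∑ t, twap N q t ^ 2 ≤ ∑ t, w t ^ 2 := by
  rw [sum_sq_eq_sum_sq_twap_add hN hw]
  exact le_add_of_nonneg_right (sum_nonneg fun _ _ => sq_nonneg _)

lemma sum_sq_twap_eq_iff {w : Fin N → ℝ} (hN : 1 ≤ N) (hw : ∑ t, w t = q) :
    ∑ t, twap N q t ^ 2 = ∑ t, w t ^ 2 ↔ w = twap N q := by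
  rw [sum_sq_eq_sum_sq_twap_add hN hw, left_eq_add,
    sum_eq_zero_iff_of_nonneg fun _ _ => sq_nonneg _]
  simp [funext_iff, sub_eq_zero]

end Twap

lemma jointCost_eq_add_sum_sq (N : ℕ) (κ α : ℝ) (u v : Fin N → ℝ) :
    jointCost N κ α u v = κ / 2 * (∑ t, u t + ∑ t, v t) ^ 2 +
      ((κ + α) / 2 * ∑ t, (u + v) t ^ 2 + α / 2 * ∑ t, (u - v) t ^ 2) := by
  calc jointCost N κ α u v
      = κ / 2 * (2 * ∑ t, (u + v) t * ∑ j ∈ Iic t, (u + v) j) +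
          (α / 2 * ∑ t, (u + v) t ^ 2 + α / 2 * ∑ t, (u - v) t ^ 2) := by
        simp only [jointCost, mul_sum univ, ← sum_add_distrib, Pi.add_apply, Pi.sub_apply]
        exact sum_congr rfl fun _ _ => by ring
    _ = _ := by
        rw [two_mul_sum_mul_sum_Iic, ← sum_add_distrib]
        simp only [Pi.add_apply]
        ring

theorem twap_unique_minimizer_general (N : ℕ) (hN : 1 ≤ N) (p q κ α : ℝ)
    (hκα : 0 < κ + α) (hα : 0 < α) (u v : Fin N → ℝ) (hu : ∑ t, u t = p) (hv : ∑ t, v t = q) :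
    jointCost N κ α (twap N p) (twap N q) ≤ jointCost N κ α u v ∧
      (jointCost N κ α u v = jointCost N κ α (twap N p) (twap N q) ↔
        u = twap N p ∧ v = twap N q) := by
  have h_add : ∑ t, (u + v) t = p + q := by simp [sum_add_distrib, hu, hv]
  have h_sub : ∑ t, (u - v) t = p - q := by simp [sum_sub_distrib, hu, hv]
  have h_add_le := mul_le_mul_of_nonneg_left (sum_sq_twap_le hN h_add) (half_pos hκα).le
  have h_sub_le := mul_le_mul_of_nonneg_left (sum_sq_twap_le hN h_sub) (half_pos hα).le
  simp only [jointCost_eq_add_sum_sq, hu, hv, sum_twap hN, ← twap_add, ← twap_sub]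
  refine ⟨by gcongr, ?_⟩
  rw [add_right_inj, eq_comm, add_eq_add_iff_eq_and_eq h_add_le h_sub_le,
    mul_right_inj' (half_pos hκα).ne', mul_right_inj' (half_pos hα).ne',
    sum_sq_twap_eq_iff hN h_add, sum_sq_twap_eq_iff hN h_sub, twap_add, twap_sub,
    add_eq_and_sub_eq_iff]

/-- **Pareto optimal strategy (TWAP is the unique joint-cost minimizer).**
Fix `N ≥ 1`, `q₀ ∈ ℝ`, `κ ≥ 0`, `α > 0`. For every pair `(u, v)` with
`Σ u_t = q₀` and `Σ v_t = q₀` one has `F(u,v) ≥ F(c,c)` where `c_t = q₀ / N` is the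
TWAP vector, with equality if and only if `u = v = c`. -/
theorem twap_unique_minimizer (N : ℕ) (hN : 1 ≤ N) (q₀ κ α : ℝ)
    (hκ : 0 ≤ κ) (hα : 0 < α)
    (c : Fin N → ℝ) (hc : ∀ t, c t = q₀ / N) :
    ∀ u v : Fin N → ℝ, (∑ t, u t) = q₀ → (∑ t, v t) = q₀ →
      jointCost N κ α c c ≤ jointCost N κ α u v ∧
      (jointCost N κ α u v = jointCost N κ α c c ↔ (u = c ∧ v = c)) := by
  intro u v hu hv
  obtain rfl : c = twap N q₀ := funext hc
  exact twap_unique_minimizer_general N hN q₀ q₀ κ α (by positivity) hα u v hu hv
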